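/- (Coefficient extraction for zero-order spline expansions.) Let R ⊂ (0,1]^d be a finite set, let γ : R → ℝ, and define f : [0,1]^d → ℝ by f(x) = Σ_{v∈R} γ_v ∏_{j=1}^d 1[v_j ≤ x_j]. Then for every u ∈ R, |γ_u| ≤ 2^d · sup_{x∈[0,1]^d} |f(x)|; consequently Σ_{u∈R} |γ_u| ≤ |R| · 2^d · sup_{x∈[0,1]^d} |f(x)|, i.e. the ℓ¹-norm of the coefficients (the sectional variation norm of f) is at most |R|·2^d times the supremum norm of f. -/

import Mathlib

/-!
Fix a knot `u ∈ R`. As `R` is finite and `u j > 0`, each coordinate `j` admits `a j ∈ [0, u j)`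
such that no knot has its `j`-th coordinate strictly between `a j` and `u j`
(`exists_left_neighbour`). The box `(a, u]` then contains no knot except `u`, so the alternating
sum of `f` over the `2 ^ d` corners of this box equals `γ u`: for each knot `v` the alternating sum
of the indicator products factors as `∏ j, (1[v j ≤ u j] - 1[v j ≤ a j]) = 1[v = u]`
(`corner_sum_eq`). The corners lie in the unit cube, whence the triangle inequality gives the
pointwise bound; the bound on the `ℓ¹`-norm follows by summing over `R`.
-/

/-- In a finite set of reals, a point `t > 0` can be separated from the smaller points
by a left endpoint that stays nonnegative. -/
lemma exists_left_neighbour (S : Finset ℝ) (t : ℝ) (ht : 0 < t) :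
    ∃ a : ℝ, 0 ≤ a ∧ a < t ∧ ∀ s ∈ S, s < t → s ≤ a := by
  obtain ⟨a, ha, hmax⟩ := (insert 0 (S.filter (· < t))).exists_max_image id ⟨0, by simp⟩
  refine ⟨a, hmax 0 (by simp), ?_, fun s hs hst => hmax s (by simp [hs, hst])⟩
  simp only [Finset.mem_insert, Finset.mem_filter] at ha
  rcases ha with rfl | ha
  · exact ht
  · exact ha.2

/-- The corner of the box `(a, u]` selected by `e`: upper endpoint where `e j` is `true`. -/
def boxCorner {d : ℕ} (a u : Fin d → ℝ) (e : Fin d → Bool) : Fin d → ℝ :=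
  fun j => if e j then u j else a j

/-- The sign of a corner in the generalized difference: `-1` to the number of lower endpoints. -/
def cornerSign {d : ℕ} (e : Fin d → Bool) : ℝ :=
  ∏ j, if e j then (1 : ℝ) else -1

lemma abs_cornerSign {d : ℕ} (e : Fin d → Bool) : |cornerSign e| = 1 := by
  rw [cornerSign, Finset.abs_prod]
  refine Finset.prod_eq_one fun j _ => ?_
  split_ifs <;> simp

/-- The generalized difference of the basis function with knot `v` over the box `(a, u]` is `1[v = u]`,
provided no coordinate of `v` lies strictly between `a j` and `u j`: it factors over the
coordinates into differences `1[v j ≤ u j] - 1[v j ≤ a j]`. -/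
lemma corner_sum_eq {d : ℕ} (a u v : Fin d → ℝ) (hau : ∀ j, a j < u j)
    (hv : ∀ j, v j < u j → v j ≤ a j) :
    ∑ e : Fin d → Bool, cornerSign e * ∏ j, (if v j ≤ boxCorner a u e j then (1 : ℝ) else 0)
      = if v = u then 1 else 0 := by
  have hfactor : ∀ j, (∑ b : Bool, (if b then (1 : ℝ) else -1) *
      (if v j ≤ (if b then u j else a j) then (1 : ℝ) else 0)) = if v j = u j then 1 else 0 := by
    intro j
    have h1 := hau j
    have h2 := hv j
    rcases lt_trichotomy (v j) (u j) with h | h | h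
    · simp [h2 h, h.le, h.ne]
    · simp [h, h1]
    · simp [h.ne', h.not_ge, (h1.trans h).not_ge]
  have hprod := Fintype.prod_sum (fun j (b : Bool) => (if b then (1 : ℝ) else -1) *
      (if v j ≤ (if b then u j else a j) then (1 : ℝ) else 0))
  refine Eq.trans (Finset.sum_congr rfl fun e _ => ?_) (hprod.symm.trans ?_)
  · rw [cornerSign, ← Finset.prod_mul_distrib]
    rfl
  · simp only [hfactor, Finset.prod_ite_zero, Finset.prod_const_one, funext_iff, Finset.mem_univ,
      true_imp_iff]

/-- Coefficient extraction for zero-order spline expansions: the `ℓ¹`-norm of the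
coefficients (the sectional variation norm) is bounded by `|R|·2^d` times the sup norm. -/
theorem stmt_9 (d : ℕ) (R : Finset (Fin d → ℝ))
    (hR : ∀ v ∈ R, ∀ j, v j ∈ Set.Ioc (0 : ℝ) 1)
    (γ : (Fin d → ℝ) → ℝ) (f : (Fin d → ℝ) → ℝ)
    (hf : ∀ x, f x = ∑ v ∈ R, γ v * ∏ j, (if v j ≤ x j then (1 : ℝ) else 0)) :
    (∀ u ∈ R, |γ u| ≤ 2 ^ d * ⨆ x ∈ Set.Icc (0 : Fin d → ℝ) 1, |f x|)
    ∧ (∑ u ∈ R, |γ u|)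
        ≤ (R.card : ℝ) * 2 ^ d * ⨆ x ∈ Set.Icc (0 : Fin d → ℝ) 1, |f x| := by
  have hbound : ∀ x, |f x| ≤ ∑ v ∈ R, |γ v| := by
    intro x
    rw [hf]
    refine (Finset.abs_sum_le_sum_abs _ _).trans (Finset.sum_le_sum fun v _ => ?_)
    rw [Finset.prod_ite_zero]
    split_ifs <;> simp
  -- The supremum is of a bounded family, so it is not a junk value; for `x` outside the cube
  -- the inner supremum is over the empty type and equals `0`.
  have hsup : ∀ y ∈ Set.Icc (0 : Fin d → ℝ) 1,
      |f y| ≤ ⨆ x ∈ Set.Icc (0 : Fin d → ℝ) 1, |f x| := by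
    intro y hy
    have hbdd : BddAbove (Set.range fun x => ⨆ _ : x ∈ Set.Icc (0 : Fin d → ℝ) 1, |f x|) := by
      refine ⟨∑ v ∈ R, |γ v|, ?_⟩
      rintro _ ⟨x, rfl⟩
      exact Real.iSup_le (fun _ => hbound x) (Finset.sum_nonneg fun _ _ => abs_nonneg _)
    refine le_trans ?_ (le_ciSup hbdd y)
    exact (ciSup_pos (f := fun _ => |f y|) hy).ge
  have hmain : ∀ u ∈ R, |γ u| ≤ 2 ^ d * ⨆ x ∈ Set.Icc (0 : Fin d → ℝ) 1, |f x| := by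
    intro u hu
    choose a ha0 hau hsep using fun j =>
      exists_left_neighbour (R.image fun v => v j) (u j) (hR u hu j).1
    have hext : γ u = ∑ e : Fin d → Bool, cornerSign e * f (boxCorner a u e) := by
      simp only [hf, Finset.mul_sum]
      rw [Finset.sum_comm]
      have hterm : ∀ v ∈ R, (∑ e : Fin d → Bool, cornerSign e *
          (γ v * ∏ j, (if v j ≤ boxCorner a u e j then (1 : ℝ) else 0)))
          = if v = u then γ v else 0 := by
        intro v hv
        have h := corner_sum_eq a u v hau
          fun j => hsep j (v j) (Finset.mem_image_of_mem (fun w => w j) hv)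
        simp only [mul_left_comm _ (γ v), ← Finset.mul_sum, h, mul_ite, mul_one, mul_zero]
      rw [Finset.sum_congr rfl hterm, Finset.sum_ite_eq' R u γ, if_pos hu]
    have hcorner : ∀ e, boxCorner a u e ∈ Set.Icc (0 : Fin d → ℝ) 1 := by
      intro e
      have h := hR u hu
      constructor <;> intro j <;> simp only [boxCorner, Pi.zero_apply, Pi.one_apply] <;>
        split_ifs
      · exact (h j).1.le
      · exact ha0 j
      · exact (h j).2
      · exact (hau j).le.trans (h j).2
    rw [hext]
    calc |∑ e : Fin d → Bool, cornerSign e * f (boxCorner a u e)|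
        ≤ ∑ e : Fin d → Bool, |cornerSign e * f (boxCorner a u e)| :=
          Finset.abs_sum_le_sum_abs _ _
      _ ≤ ∑ _e : Fin d → Bool, ⨆ x ∈ Set.Icc (0 : Fin d → ℝ) 1, |f x| := by
          refine Finset.sum_le_sum fun e _ => ?_
          rw [abs_mul, abs_cornerSign, one_mul]
          exact hsup _ (hcorner e)
      _ = 2 ^ d * ⨆ x ∈ Set.Icc (0 : Fin d → ℝ) 1, |f x| := by
          simp
  refine ⟨hmain, (Finset.sum_le_sum hmain).trans_eq ?_⟩
  rw [Finset.sum_const, nsmul_eq_mul, mul_assoc]
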